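/- A trace τ over (T,X,V) is CC if and only if its split trace τ_split is CC. (Lemma 3 of the paper.) -/

import Mathlib

open scoped Classical

/-- A trace over `(T, X, V)`: transactions `T`, shared variables `X`, values `V`.
Each transaction has a read set `RS` with read values `rdval`, a write set `WS`
with last-written values `wrval`; there is an initial transaction `t0`, a
program order `po`, per-variable read-from relations `rf x` and per-variable
store orders `sto x`. -/
structure TxnTrace (T X V : Type*) where
  RS : T → Set X
  WS : T → Set X
  rdval : T → X → V
  wrval : T → X → V
  t0 : T
  po : T → T → Prop
  rf : X → T → T → Prop
  sto : X → T → T → Prop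

/-- a strict partial order: irreflexive and transitive binary relation -/
def StrictPartialRel {α : Type*} (r : α → α → Prop) : Prop :=
  (∀ a, ¬ r a a) ∧ ∀ a b c, r a b → r b c → r a c

/-- a strict total order -/
def StrictTotalRel {α : Type*} (r : α → α → Prop) : Prop :=
  StrictPartialRel r ∧ ∀ a b, a ≠ b → r a b ∨ r b a

/-- axiom Prefix: `arb ; vis ⊆ vis` -/
def PrefixAx {α : Type*} (vis arb : α → α → Prop) : Prop :=
  ∀ a b c, arb a b → vis b c → vis a c

/-- `vis` is a strict partial order, `arb` a strict total order, `vis ⊆ arb` -/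
def GoodPair {α : Type*} (vis arb : α → α → Prop) : Prop :=
  StrictPartialRel vis ∧ StrictTotalRel arb ∧ ∀ a b, vis a b → arb a b

namespace TxnTrace

variable {T X V : Type*} (τ : TxnTrace T X V)

/-- the well-formedness conditions of a trace -/
structure WellFormed : Prop where
  rs_init : τ.RS τ.t0 = ∅
  ws_init : τ.WS τ.t0 = Set.univ
  po_irrefl : ∀ t, ¬ τ.po t t
  po_trans : ∀ a b c, τ.po a b → τ.po b c → τ.po a c
  po_init : ∀ t, t ≠ τ.t0 → τ.po τ.t0 t
  rf_wf : ∀ x t' t, τ.rf x t' t →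
    t' ≠ t ∧ x ∈ τ.RS t ∧ x ∈ τ.WS t' ∧ τ.wrval t' x = τ.rdval t x
  rf_total : ∀ t x, x ∈ τ.RS t → ∃! t', τ.rf x t' t
  sto_dom : ∀ x a b, τ.sto x a b → x ∈ τ.WS a ∧ x ∈ τ.WS b
  sto_irrefl : ∀ x a, ¬ τ.sto x a a
  sto_trans : ∀ x a b c, τ.sto x a b → τ.sto x b c → τ.sto x a c
  sto_total : ∀ x a b, x ∈ τ.WS a → x ∈ τ.WS b → a ≠ b → τ.sto x a b ∨ τ.sto x b a

/-- `rf = ⋃ x, rf x` -/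
def rfR (a b : T) : Prop := ∃ x, τ.rf x a b

/-- `sto = ⋃ x, sto x` -/
def stoR (a b : T) : Prop := ∃ x, τ.sto x a b

/-- the conflict relation: `(t1,t3) ∈ cf` iff `t1 ≠ t3` and there are `x`, `t2`
with `(t2,t1) ∈ rf_x` and `(t2,t3) ∈ sto_x` -/
def cf (a b : T) : Prop := a ≠ b ∧ ∃ x w, τ.rf x w a ∧ τ.sto x w b

/-- `vis0 = po ∪ rf` -/
def vis0 (a b : T) : Prop := τ.po a b ∨ τ.rfR a b

/-- `arb0 = po ∪ rf ∪ sto` -/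
def arb0 (a b : T) : Prop := τ.po a b ∨ τ.rfR a b ∨ τ.stoR a b

/-- happens-before: `(po ∪ rf ∪ sto ∪ cf)⁺` -/
def hb : T → T → Prop := Relation.TransGen (fun a b => τ.arb0 a b ∨ τ.cf a b)

/-- axiom PoCo: `vis0⁺ ⊆ vis` -/
def PoCo (vis : T → T → Prop) : Prop := ∀ a b, Relation.TransGen τ.vis0 a b → vis a b

/-- axiom CoArb: `arb0⁺ ⊆ arb` -/
def CoArb (arb : T → T → Prop) : Prop := ∀ a b, Relation.TransGen τ.arb0 a b → arb a b

/-- axiom RetVal: every read of `x` in `t` reads from the `arb`-greatest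
`vis`-predecessor of `t` writing `x` -/
def RetVal (vis arb : T → T → Prop) : Prop :=
  ∀ t x, x ∈ τ.RS t → ∃ t00,
    (vis t00 t ∧ x ∈ τ.WS t00) ∧
    (∀ t', vis t' t → x ∈ τ.WS t' → t' ≠ t00 → arb t' t00) ∧
    τ.rf x t00 t


/-- axiom Conflict: `sto ⊆ vis` -/
def ConflictAx (vis : T → T → Prop) : Prop := ∀ a b, τ.stoR a b → vis a b


/-- causal consistency -/
def IsCC : Prop :=
  ∃ vis arb, GoodPair vis arb ∧ τ.PoCo vis ∧ τ.CoArb arb ∧ τ.RetVal vis arb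

/-- prefix consistency -/
def IsPC : Prop :=
  ∃ vis arb, GoodPair vis arb ∧ τ.PoCo vis ∧ τ.CoArb arb ∧ τ.RetVal vis arb ∧
    PrefixAx vis arb

/-- snapshot isolation -/
def IsSI : Prop :=
  ∃ vis arb, GoodPair vis arb ∧ τ.PoCo vis ∧ τ.CoArb arb ∧ τ.RetVal vis arb ∧
    PrefixAx vis arb ∧ τ.ConflictAx vis

/-- serializability: some strict total order `arb` with `arb0⁺ ⊆ arb` satisfies
RetVal with `vis = arb` -/
def IsSER : Prop :=
  ∃ arb, StrictTotalRel arb ∧ τ.CoArb arb ∧ τ.RetVal arb arb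

/-- the read part `t_rd` of a transaction in the split trace -/
def rdPart (t : T) : T × Bool := (t, false)

/-- the write part `t_wr` of a transaction in the split trace;
the initial transaction `t0` is kept unchanged and plays both roles -/
noncomputable def wrPart (t : T) : T × Bool := if t = τ.t0 then (t, false) else (t, true)

/-- the split trace `τ_split`: every transaction `t ≠ t0` is split into a read
part `t_rd` and a write part `t_wr`; `po'` is the smallest transitive relation
containing `(t_rd, t_wr)` for every split `t` and `(u_wr, v_rd)` for `(u,v) ∈ po`;
`rf'_x = {(u_wr, v_rd) : (u,v) ∈ rf_x}`; `sto'_x = {(u_wr, v_wr) : (u,v) ∈ sto_x}`.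
(The pair `(t0, true)` is an unused dummy element with empty read and write sets and
no incident relations.) -/
noncomputable def split : TxnTrace (T × Bool) X V where
  RS p := if p = rdPart p.1 then τ.RS p.1 else ∅
  WS p := if p = τ.wrPart p.1 then τ.WS p.1 else ∅
  rdval p x := τ.rdval p.1 x
  wrval p x := τ.wrval p.1 x
  t0 := (τ.t0, false)
  po := Relation.TransGen (fun a b =>
    (∃ t, t ≠ τ.t0 ∧ a = rdPart t ∧ b = τ.wrPart t) ∨
    (∃ u v, τ.po u v ∧ a = τ.wrPart u ∧ b = rdPart v))
  rf := fun x a b => ∃ u v, τ.rf x u v ∧ a = τ.wrPart u ∧ b = rdPart v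
  sto := fun x a b => ∃ u v, τ.sto x u v ∧ a = τ.wrPart u ∧ b = τ.wrPart v

end TxnTrace

/-!
In the split trace every read by `t` happens in `t_rd` and every write in `t_wr`, so only the pairs
`(u_wr, v_rd)` of a visibility relation and the pairs `(u_wr, v_wr)` of an arbitration order matter
for `RetVal`. Restricting to these pairs turns a witness for `τ.split` into a witness for `τ`; it is
transitive because `v_rd` precedes `v_wr`. Conversely, ordering the parts of transactions
lexicographically, with `t_rd` before `t_wr`, extends a witness for `τ` to one for `τ.split`, and
restricting that extension gives back the relations one started from.
-/

theorem mem_ite_eq_iff_of_leftInverse {α β γ : Type*} {f : α → β} {π : β → α} {S : α → Set γ}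
    {b : β} {c : γ} [Decidable (b = f (π b))] (hπ : Function.LeftInverse π f) :
    c ∈ (if b = f (π b) then S (π b) else ∅) ↔ ∃ a, b = f a ∧ c ∈ S a := by
  constructor
  · intro hc
    split_ifs at hc with hb
    · exact ⟨π b, hb, hc⟩
    · exact hc.elim
  · rintro ⟨a, rfl, hc⟩
    rwa [if_pos (congrArg f (hπ a).symm), hπ a]

section Orders

variable {α β : Type*} {r vis arb : α → α → Prop} {s : β → β → Prop}

theorem strictPartialRel_iff_isStrictOrder : StrictPartialRel r ↔ IsStrictOrder α r :=
  ⟨fun h => { irrefl := h.1, trans := h.2 }, fun h => ⟨h.irrefl, h.trans⟩⟩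

theorem strictTotalRel_iff_isStrictTotalOrder : StrictTotalRel r ↔ IsStrictTotalOrder α r := by
  constructor
  · rintro ⟨hpartial, htotal⟩
    have := strictPartialRel_iff_isStrictOrder.1 hpartial
    exact { trichotomous := fun a b hab hba =>
      by_contra fun hne => (htotal a b hne).elim hab hba }
  · intro h
    exact ⟨strictPartialRel_iff_isStrictOrder.2 inferInstance, fun a b hne =>
      (trichotomous_of r a b).imp_right fun hab => hab.resolve_left hne⟩

theorem StrictPartialRel.prodLex (hr : StrictPartialRel r) (hs : StrictPartialRel s) :
    StrictPartialRel (Prod.Lex r s) := by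
  rw [strictPartialRel_iff_isStrictOrder] at *
  exact {}

theorem StrictTotalRel.prodLex (hr : StrictTotalRel r) (hs : StrictTotalRel s) :
    StrictTotalRel (Prod.Lex r s) := by
  rw [strictTotalRel_iff_isStrictTotalOrder] at *
  exact {}

theorem StrictTotalRel.preimage {f : β → α} (hr : StrictTotalRel r) (hf : Function.Injective f) :
    StrictTotalRel (f ⁻¹'o r) := by
  rw [strictTotalRel_iff_isStrictTotalOrder] at *
  exact (RelEmbedding.preimage ⟨f, hf⟩ r).isStrictTotalOrder

namespace GoodPair

theorem isTrans_vis (h : GoodPair vis arb) : IsTrans α vis := ⟨h.1.2⟩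

theorem isTrans_arb (h : GoodPair vis arb) : IsTrans α arb := ⟨h.2.1.1.2⟩

theorem prodLex (h : GoodPair vis arb) (hs : StrictTotalRel s) :
    GoodPair (Prod.Lex vis s) (Prod.Lex arb s) :=
  ⟨h.1.prodLex hs.1, h.2.1.prodLex hs, fun _ _ hlex =>
    Prod.lex_iff.2 ((Prod.lex_iff.1 hlex).imp_left (h.2.2 _ _))⟩

theorem preimage {f g : β → α} (h : GoodPair vis arb) (hf : Function.Injective f)
    (hgf : ∀ b, Relation.ReflGen vis (g b) (f b)) :
    GoodPair (fun a b => vis (f a) (g b)) (f ⁻¹'o arb) := by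
  have vis_of_vis {a : α} {b : β} (hab : vis a (g b)) : vis a (f b) := by
    rcases (Relation.reflGen_iff _ _ _).1 (hgf b) with heq | hvis
    · rwa [heq]
    · exact h.1.2 _ _ _ hab hvis
  exact ⟨⟨fun _ haa => h.1.1 _ (vis_of_vis haa), fun _ _ _ hab => h.1.2 _ _ _ (vis_of_vis hab)⟩,
    h.2.1.preimage hf, fun _ _ hab => h.2.2 _ _ (vis_of_vis hab)⟩

end GoodPair

end Orders

namespace TxnTrace

variable {T X V : Type*} {τ : TxnTrace T X V}

section Axioms

variable {vis arb : T → T → Prop}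

theorem poCo_iff [IsTrans T vis] : τ.PoCo vis ↔ τ.vis0 ≤ vis :=
  ⟨fun h _ _ hab => h _ _ (.single hab), Relation.transGen_minimal⟩

theorem coArb_iff [IsTrans T arb] : τ.CoArb arb ↔ τ.vis0 ≤ arb ∧ τ.stoR ≤ arb := by
  have arb0_eq : τ.arb0 = τ.vis0 ⊔ τ.stoR := funext₂ fun _ _ => propext or_assoc.symm
  rw [← sup_le_iff, ← arb0_eq]
  exact ⟨fun h _ _ hab => h _ _ (.single hab), Relation.transGen_minimal⟩

theorem isCC_iff : τ.IsCC ↔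
    ∃ vis arb, GoodPair vis arb ∧ τ.vis0 ≤ vis ∧ τ.stoR ≤ arb ∧ τ.RetVal vis arb := by
  refine exists₂_congr fun vis arb => and_congr_right fun hgood => ?_
  have := hgood.isTrans_vis
  have := hgood.isTrans_arb
  rw [poCo_iff, coArb_iff]
  refine and_congr_right fun hvis => ?_
  rw [and_iff_right (hvis.trans hgood.2.2)]

end Axioms

section Parts

theorem wrPart_fst (τ : TxnTrace T X V) (t : T) : (τ.wrPart t).1 = t := by
  unfold wrPart
  split_ifs <;> rfl

theorem wrPart_injective (τ : TxnTrace T X V) : Function.Injective τ.wrPart :=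
  Function.LeftInverse.injective τ.wrPart_fst

theorem rdPart_injective : Function.Injective (rdPart : T → T × Bool) :=
  Prod.mk_left_injective false

theorem reflGen_rdPart_wrPart {r : T × Bool → T × Bool → Prop}
    (h : ∀ t ≠ τ.t0, r (rdPart t) (τ.wrPart t)) (t : T) :
    Relation.ReflGen r (rdPart t) (τ.wrPart t) := by
  by_cases ht : t = τ.t0
  · rw [wrPart, if_pos ht]
    exact .refl
  · exact .single (h t ht)

theorem mem_split_RS_iff {p : T × Bool} {x : X} :
    x ∈ τ.split.RS p ↔ ∃ t, p = rdPart t ∧ x ∈ τ.RS t :=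
  mem_ite_eq_iff_of_leftInverse fun _ => rfl

theorem mem_split_WS_iff {p : T × Bool} {x : X} :
    x ∈ τ.split.WS p ↔ ∃ t, p = τ.wrPart t ∧ x ∈ τ.WS t :=
  mem_ite_eq_iff_of_leftInverse τ.wrPart_fst

theorem mem_split_RS_rdPart {t : T} {x : X} : x ∈ τ.split.RS (rdPart t) ↔ x ∈ τ.RS t := by
  simp only [mem_split_RS_iff, rdPart_injective.eq_iff, exists_eq_left']

theorem mem_split_WS_wrPart {t : T} {x : X} : x ∈ τ.split.WS (τ.wrPart t) ↔ x ∈ τ.WS t := by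
  simp only [mem_split_WS_iff, τ.wrPart_injective.eq_iff, exists_eq_left']

theorem split_rf_wrPart_rdPart {x : X} {u v : T} :
    τ.split.rf x (τ.wrPart u) (rdPart v) ↔ τ.rf x u v := by
  constructor
  · rintro ⟨u', v', huv, hu, hv⟩
    rwa [τ.wrPart_injective hu, rdPart_injective hv]
  · exact fun huv => ⟨u, v, huv, rfl, rfl⟩

end Parts

/-- The visibility relation on `T` induced by one on the parts: `u` is visible to `v` when the
write part of `u` is visible to the read part of `v`. -/
def mergeVis (τ : TxnTrace T X V) (vis : T × Bool → T × Bool → Prop) (u v : T) : Prop :=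
  vis (τ.wrPart u) (rdPart v)

/-- The arbitration order on `T` induced by one on the parts, comparing write parts. -/
def mergeArb (τ : TxnTrace T X V) (arb : T × Bool → T × Bool → Prop) : T → T → Prop :=
  τ.wrPart ⁻¹'o arb

/-- The lexicographic extension of a relation on transactions to their parts, in which the read
part `(t, false)` precedes the write part `(t, true)`. -/
def splitRel (r : T → T → Prop) : T × Bool → T × Bool → Prop :=
  Prod.Lex r (· < ·)

section SplitRel

variable {r vis arb : T → T → Prop}

theorem splitRel_rdPart_wrPart {t : T} (ht : t ≠ τ.t0) :
    splitRel r (rdPart t) (τ.wrPart t) := by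
  rw [wrPart, if_neg ht]
  exact .right t Bool.false_lt_true

theorem mergeVis_splitRel : τ.mergeVis (splitRel r) = r := by
  funext u v
  simp [mergeVis, splitRel, Prod.lex_iff, wrPart_fst, rdPart]

theorem mergeArb_splitRel : τ.mergeArb (splitRel r) = r := by
  funext u v
  simp +contextual [mergeArb, splitRel, Prod.lex_iff, wrPart_fst]

theorem _root_.GoodPair.splitRel (h : GoodPair vis arb) :
    GoodPair (splitRel vis) (splitRel arb) :=
  h.prodLex (strictTotalRel_iff_isStrictTotalOrder.2 inferInstance)

end SplitRel

section Split

variable {r vis arb : T × Bool → T × Bool → Prop}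

theorem split_vis0_le_iff [IsTrans (T × Bool) r] :
    τ.split.vis0 ≤ r ↔ (∀ t ≠ τ.t0, r (rdPart t) (τ.wrPart t)) ∧ τ.vis0 ≤ τ.mergeVis r := by
  constructor
  · intro h
    refine ⟨fun t ht => h _ _ (.inl (.single (.inl ⟨t, ht, rfl, rfl⟩))), ?_⟩
    rintro u v (hpo | ⟨x, hrf⟩)
    · exact h _ _ (.inl (.single (.inr ⟨u, v, hpo, rfl, rfl⟩)))
    · exact h _ _ (.inr ⟨x, u, v, hrf, rfl, rfl⟩)
  · rintro ⟨hparts, hvis0⟩ p q (hpo | ⟨x, u, v, hrf, rfl, rfl⟩)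
    · refine Relation.transGen_minimal ?_ p q hpo
      rintro _ _ (⟨t, ht, rfl, rfl⟩ | ⟨u, v, huv, rfl, rfl⟩)
      · exact hparts t ht
      · exact hvis0 u v (.inl huv)
    · exact hvis0 u v (.inr ⟨x, hrf⟩)

theorem split_stoR_le_iff : τ.split.stoR ≤ r ↔ τ.stoR ≤ τ.mergeArb r := by
  constructor
  · rintro h u v ⟨x, hsto⟩
    exact h _ _ ⟨x, u, v, hsto, rfl, rfl⟩
  · rintro h _ _ ⟨x, u, v, hsto, rfl, rfl⟩
    exact h u v ⟨x, hsto⟩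

theorem split_retVal_iff :
    τ.split.RetVal vis arb ↔ τ.RetVal (τ.mergeVis vis) (τ.mergeArb arb) := by
  constructor
  · intro h t x hx
    obtain ⟨_, ⟨hvis, hw⟩, hmax, hrf⟩ := h (rdPart t) x (mem_split_RS_rdPart.2 hx)
    obtain ⟨w, rfl, hxw⟩ := mem_split_WS_iff.1 hw
    exact ⟨w, ⟨hvis, hxw⟩, fun w' hvis' hxw' hne =>
      hmax _ hvis' (mem_split_WS_wrPart.2 hxw') (τ.wrPart_injective.ne hne),
      split_rf_wrPart_rdPart.1 hrf⟩
  · intro h p x hx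
    obtain ⟨t, rfl, hxt⟩ := mem_split_RS_iff.1 hx
    obtain ⟨w, ⟨hvis, hxw⟩, hmax, hrf⟩ := h t x hxt
    refine ⟨τ.wrPart w, ⟨hvis, mem_split_WS_wrPart.2 hxw⟩, ?_, split_rf_wrPart_rdPart.2 hrf⟩
    intro p' hvis' hp' hne
    obtain ⟨w', rfl, hxw'⟩ := mem_split_WS_iff.1 hp'
    exact hmax w' hvis' hxw' (ne_of_apply_ne _ hne)

theorem _root_.GoodPair.merge (h : GoodPair vis arb)
    (hparts : ∀ t ≠ τ.t0, vis (rdPart t) (τ.wrPart t)) :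
    GoodPair (τ.mergeVis vis) (τ.mergeArb arb) :=
  h.preimage τ.wrPart_injective (reflGen_rdPart_wrPart hparts)

end Split

theorem IsCC.split (h : τ.IsCC) : τ.split.IsCC := by
  obtain ⟨vis, arb, hgood, hvis0, hsto, hret⟩ := isCC_iff.1 h
  have := hgood.splitRel.isTrans_vis
  refine isCC_iff.2 ⟨splitRel vis, splitRel arb, hgood.splitRel, split_vis0_le_iff.2 ⟨?_, ?_⟩,
    split_stoR_le_iff.2 ?_, split_retVal_iff.2 ?_⟩
  · exact fun _ => splitRel_rdPart_wrPart
  · rwa [mergeVis_splitRel]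
  · rwa [mergeArb_splitRel]
  · rwa [mergeVis_splitRel, mergeArb_splitRel]

theorem IsCC.of_split (h : τ.split.IsCC) : τ.IsCC := by
  obtain ⟨vis, arb, hgood, hvis0, hsto, hret⟩ := isCC_iff.1 h
  have := hgood.isTrans_vis
  obtain ⟨hparts, hvis0⟩ := split_vis0_le_iff.1 hvis0
  exact isCC_iff.2 ⟨τ.mergeVis vis, τ.mergeArb arb, hgood.merge hparts, hvis0,
    split_stoR_le_iff.1 hsto, split_retVal_iff.1 hret⟩

end TxnTrace

theorem cc_iff_split_cc_general {T X V : Type*} (τ : TxnTrace T X V) :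
    τ.IsCC ↔ τ.split.IsCC :=
  ⟨TxnTrace.IsCC.split, TxnTrace.IsCC.of_split⟩

/-- Lemma 3: a trace is CC iff its split trace is CC. -/
theorem cc_iff_split_cc {T X V : Type*} [Fintype T] (τ : TxnTrace T X V)
    (hwf : τ.WellFormed) : τ.IsCC ↔ τ.split.IsCC :=
  cc_iff_split_cc_general τ
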